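/- arXiv:1605.02579 — 6 statements merged into one kernel-verified Lean document; each statement's English description precedes it below -/
import Mathlib

section
/- Let k be a field and V = Fin 4 → k. Then PGL₄(k) acts transitively on the roots of PG(3,k): for any two roots (Y, L, X) and (Y', L', X') of PG(3,k), there exists a k-linear equivalence g : V ≃ₗ[k] V such that Submodule.map g Y = Y', Submodule.map g L = L', and Submodule.map g X = X'. -/
/-- A root of `PG(3,k)`, in linear-algebra terms: a triple `(Y, L, X)` of `k`-subspaces of
`V = Fin 4 → k`, each of dimension `2`, such that `Y ⊓ L` and `X ⊓ L` are `1`-dimensional,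
`Y ⊓ L ≠ X ⊓ L`, and `(Y ⊔ L) ⊓ (X ⊔ L) = L`. -/
def IsRoot {k : Type*} [Field k] (Y L X : Submodule k (Fin 4 → k)) : Prop :=
  Module.finrank k Y = 2 ∧ Module.finrank k L = 2 ∧ Module.finrank k X = 2 ∧
    Module.finrank k (Y ⊓ L : Submodule k (Fin 4 → k)) = 1 ∧
    Module.finrank k (X ⊓ L : Submodule k (Fin 4 → k)) = 1 ∧
    Y ⊓ L ≠ X ⊓ L ∧ (Y ⊔ L) ⊓ (X ⊔ L) = L

/-!
A root is a path of three lines. Choose the points `p = Y ⊓ L` and `q = X ⊓ L` on `L` together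
with further points `y` of `Y` and `x` of `X` off `L`. The root conditions say exactly that
`y, p, q, x` are linearly independent, and consecutive vectors span `Y`, `L`, `X`. The linear group
is transitive on linearly independent families of a given finite length, hence on roots.
-/

open Module Submodule

section LinearIndependence

variable {K V ι : Type*} [DivisionRing K] [AddCommGroup V] [Module K V]

theorem exists_linearEquiv_apply_eq_of_linearIndependent [Finite ι] {b c : ι → V}
    (hb : LinearIndependent K b) (hc : LinearIndependent K c) :
    ∃ g : V ≃ₗ[K] V, ∀ i, g (b i) = c i := by
  have : FiniteDimensional K (span K (Set.range b)) :=
    FiniteDimensional.span_of_finite K (Set.finite_range b)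
  obtain ⟨g, hg⟩ := exists_linearEquiv_restrict_eq
    (hb.linearCombinationEquiv.symm ≪≫ₗ hc.linearCombinationEquiv)
  refine ⟨g, fun i => ?_⟩
  have hgi := hg (hb.linearCombinationEquiv (Finsupp.single i 1))
  simpa using hgi.symm

theorem span_image_eq_of_ncard_eq_finrank {b : ι → V} {s : Set ι} (hb : LinearIndepOn K b s)
    {W : Submodule K V} [FiniteDimensional K W] (hs : ∀ i ∈ s, b i ∈ W)
    (hcard : s.ncard = finrank K W) : span K (b '' s) = W := by
  have hbW : LinearIndependent K fun i : s => (⟨b i, hs i i.2⟩ : W) :=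
    LinearIndependent.of_comp W.subtype hb
  have : Finite s := hbW.finite
  have : Fintype s := Fintype.ofFinite s
  refine eq_of_le_of_finrank_eq (span_le.mpr (Set.image_subset_iff.mpr hs)) ?_
  rw [Set.image_eq_range, finrank_span_eq_card hb, ← Nat.card_eq_fintype_card,
    Nat.card_coe_set_eq, hcard]

theorem exists_mem_notMem_of_finrank_inf_ne {W L : Submodule K V}
    (h : finrank K ↥(W ⊓ L) ≠ finrank K W) : ∃ v ∈ W, v ∉ L := by
  refine SetLike.not_le_iff_exists.mp fun hWL => h ?_
  rw [inf_eq_left.mpr hWL]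

theorem linearIndependent_of_mem_of_notMem {L X : Submodule K V} {y p q x : V}
    (hy : y ∉ X ⊔ L) (hpL : p ∈ L) (hpX : p ∉ X) (hqX : q ∈ X) (hqL : q ∈ L) (hq : q ≠ 0)
    (hxX : x ∈ X) (hxL : x ∉ L) : LinearIndependent K ![y, p, q, x] := by
  have hqx : LinearIndependent K ![q, x] :=
    (LinearIndependent.pair_iff' hq).mpr fun a hax => hxL (hax ▸ L.smul_mem a hqL)
  have hpqx : LinearIndependent K ![p, q, x] := by
    refine hqx.finCons fun hp => hpX (span_le.mpr ?_ hp)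
    simp [Set.pair_subset_iff, hqX, hxX]
  refine hpqx.finCons fun hy' => hy (span_le.mpr ?_ hy')
  simp [Set.insert_subset_iff, mem_sup_right hpL, mem_sup_left hqX, mem_sup_left hxX]

end LinearIndependence

/-- A root of the projective space of an arbitrary vector space `V` over a division ring, of which
`IsRoot` is the case `V = Fin 4 → k`. Lines are encoded as two-dimensional subspaces. -/
structure IsRootTriple {K V : Type*} [DivisionRing K] [AddCommGroup V] [Module K V]
    (Y L X : Submodule K V) : Prop where
  finrank_left : finrank K Y = 2
  finrank_mid : finrank K L = 2
  finrank_right : finrank K X = 2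
  finrank_left_inf_mid : finrank K ↥(Y ⊓ L) = 1
  finrank_right_inf_mid : finrank K ↥(X ⊓ L) = 1
  left_inf_mid_ne_right_inf_mid : Y ⊓ L ≠ X ⊓ L
  sup_inf_sup_eq_mid : (Y ⊔ L) ⊓ (X ⊔ L) = L

theorem IsRoot.isRootTriple {k : Type*} [Field k] {Y L X : Submodule k (Fin 4 → k)}
    (h : IsRoot Y L X) : IsRootTriple Y L X := by
  obtain ⟨hY, hL, hX, hYL, hXL, hne, hsup⟩ := h
  exact ⟨hY, hL, hX, hYL, hXL, hne, hsup⟩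

namespace IsRootTriple

variable {K V : Type*} [DivisionRing K] [AddCommGroup V] [Module K V] {Y L X : Submodule K V}

theorem not_left_inf_mid_le_right (h : IsRootTriple Y L X) : ¬ Y ⊓ L ≤ X := by
  intro hle
  have : FiniteDimensional K ↥(X ⊓ L) := .of_finrank_pos (by simp [h.finrank_right_inf_mid])
  exact h.left_inf_mid_ne_right_inf_mid <| eq_of_le_of_finrank_eq (le_inf hle inf_le_right)
    (h.finrank_left_inf_mid.trans h.finrank_right_inf_mid.symm)

theorem notMem_right_sup_mid (h : IsRootTriple Y L X) {y : V} (hyY : y ∈ Y) (hyL : y ∉ L) :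
    y ∉ X ⊔ L :=
  fun hy => hyL (h.sup_inf_sup_eq_mid.le ⟨mem_sup_left hyY, hy⟩)

theorem exists_linearIndependent_span_eq (h : IsRootTriple Y L X) :
    ∃ b : Fin 4 → V, LinearIndependent K b ∧
      span K (b '' {0, 1}) = Y ∧ span K (b '' {1, 2}) = L ∧ span K (b '' {2, 3}) = X := by
  have : FiniteDimensional K Y := .of_finrank_pos (by simp [h.finrank_left])
  have : FiniteDimensional K L := .of_finrank_pos (by simp [h.finrank_mid])
  have : FiniteDimensional K X := .of_finrank_pos (by simp [h.finrank_right])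
  obtain ⟨y, hyY, hyL⟩ : ∃ y ∈ Y, y ∉ L := exists_mem_notMem_of_finrank_inf_ne <| by
    simp [h.finrank_left_inf_mid, h.finrank_left]
  obtain ⟨x, hxX, hxL⟩ : ∃ x ∈ X, x ∉ L := exists_mem_notMem_of_finrank_inf_ne <| by
    simp [h.finrank_right_inf_mid, h.finrank_right]
  obtain ⟨p, ⟨(hpY : p ∈ Y), (hpL : p ∈ L)⟩, hpX⟩ :=
    SetLike.not_le_iff_exists.mp h.not_left_inf_mid_le_right
  obtain ⟨q, ⟨(hqX : q ∈ X), (hqL : q ∈ L)⟩, hq⟩ : ∃ q ∈ X ⊓ L, q ≠ 0 :=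
    exists_mem_ne_zero_of_ne_bot <| one_le_finrank_iff.mp h.finrank_right_inf_mid.ge
  have hb : LinearIndependent K ![y, p, q, x] :=
    linearIndependent_of_mem_of_notMem (h.notMem_right_sup_mid hyY hyL) hpL hpX hqX hqL hq hxX hxL
  refine ⟨_, hb, span_image_eq_of_ncard_eq_finrank (hb.linearIndepOn _) (by simp [hyY, hpY]) ?_,
    span_image_eq_of_ncard_eq_finrank (hb.linearIndepOn _) (by simp [hpL, hqL]) ?_,
    span_image_eq_of_ncard_eq_finrank (hb.linearIndepOn _) (by simp [hqX, hxX]) ?_⟩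
  · rw [h.finrank_left, Set.ncard_pair (by decide)]
  · rw [h.finrank_mid, Set.ncard_pair (by decide)]
  · rw [h.finrank_right, Set.ncard_pair (by decide)]

end IsRootTriple

theorem PGL_transitive_on_roots_general {K V : Type*} [DivisionRing K] [AddCommGroup V]
    [Module K V] {Y L X Y' L' X' : Submodule K V}
    (h : IsRootTriple Y L X) (h' : IsRootTriple Y' L' X') :
    ∃ g : V ≃ₗ[K] V, Submodule.map (g : V →ₗ[K] V) Y = Y' ∧
      Submodule.map (g : V →ₗ[K] V) L = L' ∧ Submodule.map (g : V →ₗ[K] V) X = X' := by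
  obtain ⟨b, hb, rfl, rfl, rfl⟩ := h.exists_linearIndependent_span_eq
  obtain ⟨c, hc, rfl, rfl, rfl⟩ := h'.exists_linearIndependent_span_eq
  obtain ⟨g, hg⟩ := exists_linearEquiv_apply_eq_of_linearIndependent hb hc
  have map_span_image (s : Set (Fin 4)) :
      Submodule.map (g : V →ₗ[K] V) (span K (b '' s)) = span K (c '' s) := by
    simp only [map_span, Set.image_image, LinearEquiv.coe_coe, hg]
  exact ⟨g, map_span_image _, map_span_image _, map_span_image _⟩

/-- `PGL₄(k)` acts transitively on the roots of `PG(3,k)`. -/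
theorem PGL_transitive_on_roots {k : Type*} [Field k]
    (Y L X Y' L' X' : Submodule k (Fin 4 → k))
    (h : IsRoot Y L X) (h' : IsRoot Y' L' X') :
    ∃ g : (Fin 4 → k) ≃ₗ[k] (Fin 4 → k),
      Submodule.map (g : (Fin 4 → k) →ₗ[k] (Fin 4 → k)) Y = Y' ∧
      Submodule.map (g : (Fin 4 → k) →ₗ[k] (Fin 4 → k)) L = L' ∧
      Submodule.map (g : (Fin 4 → k) →ₗ[k] (Fin 4 → k)) X = X' :=
  PGL_transitive_on_roots_general h.isRootTriple h'.isRootTriple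
end

section
/- Let k be a field, V a finite-dimensional k-vector space, H a hyperplane of V (a submodule with finrank H + 1 = finrank V), and P a 1-dimensional subspace with P ≤ H. If L and L' are 2-dimensional subspaces of V with L ⊓ H = P and L' ⊓ H = P, then there exists a k-linear equivalence g : V ≃ₗ[k] V such that g h = h for every h ∈ H and Submodule.map g L' = L. -/
/-!
Since `L ⊔ H = L' ⊔ H = ⊤`, both `L` and `L'` contain a complement of `H`, and the two complements
are isomorphic through `V ⧸ H`. Extending this isomorphism by the identity on `H` gives `g`: it
fixes `L' ⊓ H = L ⊓ H` pointwise and maps the complement in `L'` onto the one in `L`.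
-/

section Lattice

variable {α : Type*} [Lattice α] [IsModularLattice α] {a b c : α}

theorem exists_le_isCompl_of_codisjoint [BoundedOrder α] [ComplementedLattice α]
    (h : Codisjoint a b) : ∃ c ≤ a, IsCompl b c := by
  obtain ⟨c, hca, hc⟩ := Disjoint.exists_isCompl h.dual
  exact ⟨OrderDual.ofDual c, hca, hc.ofDual.symm⟩

theorem inf_sup_eq_of_le_of_codisjoint [OrderTop α] (hca : c ≤ a) (h : Codisjoint b c) :
    a ⊓ b ⊔ c = a := by
  rw [inf_sup_assoc_of_le b hca, h.eq_top, inf_top_eq]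

end Lattice

theorem codisjoint_of_finrank_add_finrank_eq {K V : Type*} [DivisionRing K] [AddCommGroup V]
    [Module K V] [FiniteDimensional K V] {W U : Submodule K V}
    (h : Module.finrank K W + Module.finrank K U =
      Module.finrank K V + Module.finrank K ↥(W ⊓ U)) : Codisjoint W U := by
  rw [← Submodule.finrank_sup_add_finrank_inf_eq, Nat.add_right_cancel_iff] at h
  exact codisjoint_iff.mpr (Submodule.eq_top_of_finrank_eq h)

section AxialEquiv

variable {R V : Type*} [Ring R] [AddCommGroup V] [Module R V] {H C C' : Submodule R V}

/-- The canonical isomorphism between two complements of `H`, through `V ⧸ H`: the projection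
onto `C` parallel to `H`. -/
noncomputable def complEquiv (hC' : IsCompl H C') (hC : IsCompl H C) : C' ≃ₗ[R] C :=
  (H.quotientEquivOfIsCompl C' hC').symm ≪≫ₗ H.quotientEquivOfIsCompl C hC

/-- The automorphism with axis `H` that carries one complement of `H` to another:
the identity on `H`, and `complEquiv` on `C'`. -/
noncomputable def axialEquiv (hC' : IsCompl H C') (hC : IsCompl H C) : V ≃ₗ[R] V :=
  (H.prodEquivOfIsCompl C' hC').symm ≪≫ₗ
    (LinearEquiv.refl R H).prodCongr (complEquiv hC' hC) ≪≫ₗ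
    H.prodEquivOfIsCompl C hC

theorem axialEquiv_apply_of_mem (hC' : IsCompl H C') (hC : IsCompl H C) {x : V} (hx : x ∈ H) :
    axialEquiv hC' hC x = x := by
  lift x to H using hx
  simp [axialEquiv]

theorem map_axialEquiv_of_le (hC' : IsCompl H C') (hC : IsCompl H C) {P : Submodule R V}
    (hP : P ≤ H) : P.map (axialEquiv hC' hC : V →ₗ[R] V) = P := by
  have fixes_points : Set.EqOn (axialEquiv hC' hC) id P := fun x hx ↦
    axialEquiv_apply_of_mem hC' hC (hP hx)
  exact SetLike.coe_injective (fixes_points.image_eq.trans (Set.image_id _))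

theorem axialEquiv_apply_compl (hC' : IsCompl H C') (hC : IsCompl H C) (x : C') :
    axialEquiv hC' hC x = complEquiv hC' hC x := by
  simp [axialEquiv]

theorem map_axialEquiv_compl (hC' : IsCompl H C') (hC : IsCompl H C) :
    C'.map (axialEquiv hC' hC : V →ₗ[R] V) = C := by
  have restrict_eq : (axialEquiv hC' hC : V →ₗ[R] V) ∘ₗ C'.subtype =
      C.subtype ∘ₗ (complEquiv hC' hC : C' →ₗ[R] C) :=
    LinearMap.ext (axialEquiv_apply_compl hC' hC)
  calc C'.map (axialEquiv hC' hC : V →ₗ[R] V)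
      = ((axialEquiv hC' hC : V →ₗ[R] V) ∘ₗ C'.subtype).range := by
        rw [LinearMap.range_comp, Submodule.range_subtype]
    _ = C := by rw [restrict_eq, LinearEquiv.range_comp, Submodule.range_subtype]

end AxialEquiv

theorem exists_translation_mapping_line_general {R V : Type*} [Ring R] [AddCommGroup V]
    [Module R V] [IsSemisimpleModule R V] {H L L' : Submodule R V}
    (hL : Codisjoint L H) (hL' : Codisjoint L' H) (hinf : L ⊓ H = L' ⊓ H) :
    ∃ g : V ≃ₗ[R] V, (∀ h ∈ H, g h = h) ∧ L'.map (g : V →ₗ[R] V) = L := by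
  obtain ⟨C, hCL, hC⟩ := exists_le_isCompl_of_codisjoint hL
  obtain ⟨C', hCL', hC'⟩ := exists_le_isCompl_of_codisjoint hL'
  refine ⟨axialEquiv hC' hC, fun h hh ↦ axialEquiv_apply_of_mem hC' hC hh, ?_⟩
  calc L'.map (axialEquiv hC' hC : V →ₗ[R] V)
      = (L' ⊓ H ⊔ C').map (axialEquiv hC' hC : V →ₗ[R] V) := by
        rw [inf_sup_eq_of_le_of_codisjoint hCL' hC'.codisjoint]
    _ = L ⊓ H ⊔ C := by
        rw [Submodule.map_sup, map_axialEquiv_of_le hC' hC inf_le_right,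
          map_axialEquiv_compl hC' hC, hinf]
    _ = L := inf_sup_eq_of_le_of_codisjoint hCL hC.codisjoint

/-- If `H` is a hyperplane of a finite-dimensional vector space `V`, `P ≤ H` is a point,
and `L`, `L'` are lines with `L ⊓ H = P` and `L' ⊓ H = P`, then some translation with
axis `H` (an automorphism fixing `H` pointwise) maps `L'` onto `L`. -/
theorem exists_translation_mapping_line {k V : Type*} [Field k] [AddCommGroup V]
    [Module k V] [FiniteDimensional k V]
    (H : Submodule k V) (hH : Module.finrank k H + 1 = Module.finrank k V)
    (P : Submodule k V) (hP : Module.finrank k P = 1) (hPH : P ≤ H)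
    (L L' : Submodule k V)
    (hL : Module.finrank k L = 2) (hL' : Module.finrank k L' = 2)
    (hLH : L ⊓ H = P) (hL'H : L' ⊓ H = P) :
    ∃ g : V ≃ₗ[k] V, (∀ h ∈ H, g h = h) ∧
      Submodule.map (g : V →ₗ[k] V) L' = L := by
  exact exists_translation_mapping_line_general
    (codisjoint_of_finrank_add_finrank_eq (by rw [hLH]; lia))
    (codisjoint_of_finrank_add_finrank_eq (by rw [hL'H]; lia)) (hLH.trans hL'H.symm)
end

section
/- Let k be a field, V a k-vector space, and let U, W be subspaces of V with U ⊔ W = ⊤ and U ⊓ W ≠ ⊥. If a k-linear equivalence g : V ≃ₗ[k] V satisfies g u ∈ Submodule.span k {u} for every u ∈ U and g w ∈ Submodule.span k {w} for every w ∈ W, then there exists c : k such that g v = c • v for all v ∈ V; in particular g fixes every 1-dimensional subspace of V, i.e. it induces the identity on the projective space of V. -/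
/-!
If `x ≠ 0`, `u` and `x + u` are each mapped to a multiple of themselves, comparing the three
factors shows that `u` is scaled by the same factor as `x`. A nonzero `x` in `U ⊓ W` thus carries
its factor to all of `U` and all of `W`, and by linearity to `U ⊔ W`.
-/

section

variable {R M : Type*} [CommRing R] [IsDomain R] [AddCommGroup M] [Module R M]
  [Module.IsTorsionFree R M] {f : M →ₗ[R] M}

theorem apply_eq_smul_of_apply_add_mem_span_singleton {c : R} {x u : M} (hx₀ : x ≠ 0)
    (hx : f x = c • x) (hu : f u ∈ Submodule.span R {u})
    (hxu : f (x + u) ∈ Submodule.span R {x + u}) :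
    f u = c • u := by
  obtain ⟨a, hau⟩ := Submodule.mem_span_singleton.1 hu
  obtain ⟨b, hbxu⟩ := Submodule.mem_span_singleton.1 hxu
  have dependence : (b - a) • u = (c - b) • x := by
    rw [map_add, hx, ← hau, smul_add] at hbxu
    rw [sub_smul, sub_smul, sub_eq_sub_iff_add_eq_add, add_comm, hbxu]
  obtain rfl | hab := eq_or_ne b a
  · have hcb : c = b := by simpa [hx₀, sub_eq_zero, eq_comm] using dependence
    rw [hcb, hau]
  · -- `u` and `x` are now dependent, so `f` multiplies a nonzero multiple of `u` by `c`.
    refine smul_right_injective M (sub_ne_zero.2 hab) ?_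
    calc
      (b - a) • f u = f ((c - b) • x) := by rw [← map_smul, dependence]
      _ = c • (c - b) • x := by rw [map_smul, hx, smul_comm]
      _ = (b - a) • c • u := by rw [← dependence, smul_comm]

theorem scalar_of_fixes_two_spanning_subspaces_general {U W : Submodule R M} (hI : U ⊓ W ≠ ⊥)
    (hU : ∀ u ∈ U, f u ∈ Submodule.span R {u}) (hW : ∀ w ∈ W, f w ∈ Submodule.span R {w}) :
    ∃ c : R, ∀ v ∈ U ⊔ W, f v = c • v := by
  obtain ⟨x, ⟨hxU, hxW⟩, hx₀⟩ := Submodule.exists_mem_ne_zero_of_ne_bot hI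
  obtain ⟨c, hcx⟩ := Submodule.mem_span_singleton.1 (hU x hxU)
  have scalar_on {S : Submodule R M} (hxS : x ∈ S)
      (hS : ∀ s ∈ S, f s ∈ Submodule.span R {s}) : Set.EqOn f (c • LinearMap.id : M →ₗ[R] M) S :=
    fun s hs ↦ apply_eq_smul_of_apply_add_mem_span_singleton hx₀ hcx.symm (hS s hs)
      (hS (x + s) (S.add_mem hxS hs))
  exact ⟨c, LinearMap.eqOn_sup (scalar_on hxU hU) (scalar_on hxW hW)⟩

end

/-- If `U ⊔ W = ⊤`, `U ⊓ W ≠ ⊥`, and a linear automorphism `g` of `V` fixes every point of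
the projective space lying in `U` or in `W` (i.e. `g u ∈ span {u}` for all `u ∈ U` and all
`u ∈ W`), then `g` is a scalar map, hence induces the identity collineation. -/
theorem scalar_of_fixes_two_spanning_subspaces {k V : Type*} [Field k] [AddCommGroup V]
    [Module k V] (U W : Submodule k V) (hUW : U ⊔ W = ⊤) (hI : U ⊓ W ≠ ⊥)
    (g : V ≃ₗ[k] V)
    (hU : ∀ u ∈ U, g u ∈ Submodule.span k {u})
    (hW : ∀ w ∈ W, g w ∈ Submodule.span k {w}) :
    ∃ c : k, ∀ v : V, g v = c • v := by
  obtain ⟨c, hc⟩ := scalar_of_fixes_two_spanning_subspaces_general (f := g.toLinearMap) hI hU hW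
  exact ⟨c, fun v ↦ hc v (hUW ▸ Submodule.mem_top)⟩
end

section
/- Let k be a field, V a k-vector space, and let X, Y, L be subspaces of V with X ⊔ Y = ⊤, L ⊓ X ≠ ⊥ and L ⊓ Y ≠ ⊥. If a k-linear equivalence g : V ≃ₗ[k] V satisfies g u ∈ Submodule.span k {u} for every u ∈ X, every u ∈ Y, and every u ∈ L, then there exists c : k such that g v = c • v for all v ∈ V. -/
/-!
On a subspace all of whose points it fixes, `g` acts with a single eigenvalue, for otherwise the
sum of two eigenvectors with distinct eigenvalues would again be an eigenvector. Eigenspaces for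
distinct eigenvalues are disjoint, so `L` shares its eigenvalue with `X` and with `Y`; the
eigenspace of this common eigenvalue contains `X ⊔ Y`.
-/

open Module End

section TorsionFree

variable {R M : Type*} [CommRing R] [IsDomain R] [AddCommGroup M] [Module R M]
  [IsTorsionFree R M] {f : End R M}

theorem eigenvalue_eq_of_add_mem_eigenspace {a b c : R} {x y : M}
    (hx : f.HasEigenvector a x) (hy : f.HasEigenvector b y) (hxy : x + y ∈ f.eigenspace c) :
    a = b := by
  by_contra hab
  have hli : LinearIndependent R ![x, y] :=
    eigenvectors_linearIndependent' f ![a, b] (injective_pair_iff_ne.mpr hab) ![x, y]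
      (Fin.forall_fin_two.mpr ⟨hx, hy⟩)
  have hfxy : f (x + y) = c • (x + y) := mem_eigenspace_iff.mp hxy
  rw [map_add, hx.apply_eq_smul, hy.apply_eq_smul] at hfxy
  have hsum : (a - c) • x + (b - c) • y = 0 := by linear_combination (norm := module) hfxy
  obtain ⟨hac, hbc⟩ := LinearIndependent.pair_iff.mp hli _ _ hsum
  exact hab (sub_left_injective (hac.trans hbc.symm))

theorem exists_le_eigenspace_of_forall_mem_span_singleton {W : Submodule R M}
    (hW : ∀ u ∈ W, f u ∈ Submodule.span R {u}) : ∃ a : R, W ≤ f.eigenspace a := by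
  have exists_eigenvalue : ∀ u ∈ W, ∃ a : R, u ∈ f.eigenspace a := fun u hu ↦ by
    obtain ⟨a, ha⟩ := Submodule.mem_span_singleton.mp (hW u hu)
    exact ⟨a, mem_eigenspace_iff.mpr ha.symm⟩
  rcases eq_or_ne W ⊥ with rfl | hW_ne
  · exact ⟨0, bot_le⟩
  obtain ⟨x, hx, hx_ne⟩ := W.ne_bot_iff.mp hW_ne
  obtain ⟨a, hxa⟩ := exists_eigenvalue x hx
  refine ⟨a, fun y hy ↦ ?_⟩
  rcases eq_or_ne y 0 with rfl | hy_ne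
  · exact zero_mem _
  obtain ⟨b, hyb⟩ := exists_eigenvalue y hy
  obtain ⟨c, hxyc⟩ := exists_eigenvalue (x + y) (W.add_mem hx hy)
  rwa [eigenvalue_eq_of_add_mem_eigenspace ⟨hxa, hx_ne⟩ ⟨hyb, hy_ne⟩ hxyc]

theorem eigenvalue_eq_of_inf_ne_bot {a b : R} {P Q : Submodule R M} (hPQ : P ⊓ Q ≠ ⊥)
    (hP : P ≤ f.eigenspace a) (hQ : Q ≤ f.eigenspace b) : a = b := by
  by_contra hab
  exact hPQ ((f.eigenspaces_iSupIndep.pairwiseDisjoint hab).mono hP hQ).eq_bot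

theorem scalar_of_fixes_three_subspaces_general {X Y L : Submodule R M} (hXY : X ⊔ Y = ⊤)
    (hLX : L ⊓ X ≠ ⊥) (hLY : L ⊓ Y ≠ ⊥)
    (hX : ∀ u ∈ X, f u ∈ Submodule.span R {u})
    (hY : ∀ u ∈ Y, f u ∈ Submodule.span R {u})
    (hL : ∀ u ∈ L, f u ∈ Submodule.span R {u}) :
    ∃ c : R, ∀ v : M, f v = c • v := by
  obtain ⟨a, hXa⟩ := exists_le_eigenspace_of_forall_mem_span_singleton hX
  obtain ⟨b, hYb⟩ := exists_le_eigenspace_of_forall_mem_span_singleton hY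
  obtain ⟨c, hLc⟩ := exists_le_eigenspace_of_forall_mem_span_singleton hL
  obtain rfl : c = a := eigenvalue_eq_of_inf_ne_bot hLX hLc hXa
  obtain rfl : c = b := eigenvalue_eq_of_inf_ne_bot hLY hLc hYb
  have htop : ⊤ ≤ f.eigenspace c := hXY ▸ sup_le hXa hYb
  exact ⟨c, fun v ↦ mem_eigenspace_iff.mp (htop Submodule.mem_top)⟩

end TorsionFree

/-- If `X ⊔ Y = ⊤`, `L` meets both `X` and `Y` nontrivially, and a linear automorphism `g`
of `V` fixes every projective point lying in `X`, in `Y`, or in `L`, then `g` is a scalar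
map. -/
theorem scalar_of_fixes_three_subspaces {k V : Type*} [Field k] [AddCommGroup V]
    [Module k V] (X Y L : Submodule k V) (hXY : X ⊔ Y = ⊤)
    (hLX : L ⊓ X ≠ ⊥) (hLY : L ⊓ Y ≠ ⊥)
    (g : V ≃ₗ[k] V)
    (hX : ∀ u ∈ X, g u ∈ Submodule.span k {u})
    (hY : ∀ u ∈ Y, g u ∈ Submodule.span k {u})
    (hL : ∀ u ∈ L, g u ∈ Submodule.span k {u}) :
    ∃ c : k, ∀ v : V, g v = c • v :=
  scalar_of_fixes_three_subspaces_general (f := g.toLinearMap) hXY hLX hLY hX hY hL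
end

section
/- Let k be a field, let a, b be natural numbers with a, b ≥ 2, and let V = Fin (a+b) → k. Then PGL_{a+b}(k) acts transitively on the fundaments of type (a,b) of PG(a+b−1,k): for any two fundaments (α, L, β) and (α', L', β') of type (a,b), there exists a k-linear equivalence g : V ≃ₗ[k] V with Submodule.map g α = α', Submodule.map g L = L', and Submodule.map g β = β'. -/
/-!
Since `α ⊓ β ≤ (α ⊔ L) ⊓ (β ⊔ L) = L`, the subspace `α ⊓ β` lies in both of the distinct points
`α ⊓ L` and `β ⊓ L`, so it is zero: `V = α ⊕ β`, and `L` is the span of these two points. The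
triple is thus determined by a decomposition of `V` together with a point in each summand, and
linear isomorphisms matching the summands and their points glue to one matching the fundaments.
-/

/-- A fundament of type `(a,b)` of `PG(n-1,k)`: a triple `(α, L, β)` of subspaces of
`Fin n → k` with `finrank α = a`, `finrank β = b`, `finrank L = 2`, `α ⊓ L` and `β ⊓ L`
one-dimensional and distinct, and `(α ⊔ L) ⊓ (β ⊔ L) = L`. -/
def IsFundament {k : Type*} [Field k] {n : ℕ} (a b : ℕ)
    (α L β : Submodule k (Fin n → k)) : Prop :=
  Module.finrank k α = a ∧ Module.finrank k β = b ∧ Module.finrank k L = 2 ∧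
    Module.finrank k (α ⊓ L : Submodule k (Fin n → k)) = 1 ∧
    Module.finrank k (β ⊓ L : Submodule k (Fin n → k)) = 1 ∧
    α ⊓ L ≠ β ⊓ L ∧ (α ⊔ L) ⊓ (β ⊔ L) = L

section Linear

variable {R V W : Type*} [Ring R] [AddCommGroup V] [Module R V] [AddCommGroup W] [Module R W]

theorem exists_linearEquiv_of_isCompl {α β : Submodule R V} {α' β' : Submodule R W}
    (h : IsCompl α β) (h' : IsCompl α' β') (e : α ≃ₗ[R] α') (f : β ≃ₗ[R] β') :
    ∃ g : V ≃ₗ[R] W, g.toLinearMap ∘ₗ α.subtype = α'.subtype ∘ₗ e.toLinearMap ∧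
      g.toLinearMap ∘ₗ β.subtype = β'.subtype ∘ₗ f.toLinearMap := by
  refine ⟨(Submodule.prodEquivOfIsCompl α β h).symm ≪≫ₗ e.prodCongr f ≪≫ₗ
    Submodule.prodEquivOfIsCompl α' β' h', ?_, ?_⟩ <;> ext x <;> simp

theorem map_eq_of_comp_subtype_eq {α : Submodule R V} {α' : Submodule R W} {g : V →ₗ[R] W}
    {e : α ≃ₗ[R] α'} (hg : g ∘ₗ α.subtype = α'.subtype ∘ₗ e.toLinearMap) : α.map g = α' := by
  rw [← α.range_subtype, ← LinearMap.range_comp, hg, LinearEquiv.range_comp,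
    Submodule.range_subtype]

theorem map_inf_eq_of_comp_subtype_eq {α P : Submodule R V} {α' P' : Submodule R W}
    {g : V →ₗ[R] W} {e : α →ₗ[R] α'} (hg : g ∘ₗ α.subtype = α'.subtype ∘ₗ e)
    (he : (P.comap α.subtype).map e = P'.comap α'.subtype) : (α ⊓ P).map g = α' ⊓ P' := by
  rw [← Submodule.map_comap_subtype, ← Submodule.map_comp, hg, Submodule.map_comp, he,
    Submodule.map_comap_subtype]

end Linear

section Dimension

variable {K V W : Type*} [DivisionRing K] [AddCommGroup V] [Module K V]
  [AddCommGroup W] [Module K W]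

theorem exists_linearEquiv_map_eq [FiniteDimensional K V] [FiniteDimensional K W]
    {P : Submodule K V} {Q : Submodule K W} (hVW : Module.finrank K V = Module.finrank K W)
    (hPQ : Module.finrank K P = Module.finrank K Q) :
    ∃ e : V ≃ₗ[K] W, P.map e.toLinearMap = Q := by
  obtain ⟨P', hP⟩ := P.exists_isCompl
  obtain ⟨Q', hQ⟩ := Q.exists_isCompl
  have hPQ' : Module.finrank K P' = Module.finrank K Q' := by
    have := Submodule.finrank_add_eq_of_isCompl hP
    have := Submodule.finrank_add_eq_of_isCompl hQ
    omega
  obtain ⟨e, he, -⟩ := exists_linearEquiv_of_isCompl hP hQ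
    (LinearEquiv.ofFinrankEq P Q hPQ) (LinearEquiv.ofFinrankEq P' Q' hPQ')
  exact ⟨e, map_eq_of_comp_subtype_eq he⟩

theorem finrank_comap_subtype (α P : Submodule K V) :
    Module.finrank K (P.comap α.subtype) = Module.finrank K (α ⊓ P : Submodule K V) := by
  rw [← Submodule.map_comap_subtype, Submodule.finrank_map_subtype_eq]

theorem exists_linearEquiv_map_eq_of_isCompl [FiniteDimensional K V] [FiniteDimensional K W]
    {α β P Q : Submodule K V} {α' β' P' Q' : Submodule K W}
    (h : IsCompl α β) (h' : IsCompl α' β')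
    (hα : Module.finrank K α = Module.finrank K α')
    (hβ : Module.finrank K β = Module.finrank K β')
    (hP : Module.finrank K (α ⊓ P : Submodule K V) = Module.finrank K (α' ⊓ P' : Submodule K W))
    (hQ : Module.finrank K (β ⊓ Q : Submodule K V) = Module.finrank K (β' ⊓ Q' : Submodule K W)) :
    ∃ g : V ≃ₗ[K] W,
      α.map g.toLinearMap = α' ∧ (α ⊓ P).map g.toLinearMap = α' ⊓ P' ∧
      β.map g.toLinearMap = β' ∧ (β ⊓ Q).map g.toLinearMap = β' ⊓ Q' := by
  simp only [← finrank_comap_subtype] at hP hQ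
  obtain ⟨e, he⟩ := exists_linearEquiv_map_eq hα hP
  obtain ⟨f, hf⟩ := exists_linearEquiv_map_eq hβ hQ
  obtain ⟨g, hge, hgf⟩ := exists_linearEquiv_of_isCompl h h' e f
  exact ⟨g, map_eq_of_comp_subtype_eq hge, map_inf_eq_of_comp_subtype_eq hge he,
    map_eq_of_comp_subtype_eq hgf, map_inf_eq_of_comp_subtype_eq hgf hf⟩

end Dimension

theorem disjoint_of_isAtom_inf {X : Type*} [SemilatticeInf X] [OrderBot X] {α L β : X}
    (hα : IsAtom (α ⊓ L)) (hβ : IsAtom (β ⊓ L)) (hne : α ⊓ L ≠ β ⊓ L) (hL : α ⊓ β ≤ L) :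
    Disjoint α β := by
  have hdisj : Disjoint (α ⊓ L) (β ⊓ L) := hα.disjoint_of_ne hβ hne
  rw [disjoint_iff_inf_le]
  calc α ⊓ β ≤ (α ⊓ L) ⊓ (β ⊓ L) :=
        le_inf (le_inf inf_le_left hL) (le_inf inf_le_right hL)
    _ ≤ ⊥ := hdisj.le_bot

/-- A fundament of type `(a, b)` in a vector space `V` over a division ring: the coordinate-free
form of `IsFundament`. As there, the dimension of `V` is left free, and transitivity is about the
case `finrank K V = a + b`. -/
structure IsFundamentIn {K V : Type*} [DivisionRing K] [AddCommGroup V] [Module K V] (a b : ℕ)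
    (α L β : Submodule K V) : Prop where
  finrank_left : Module.finrank K α = a
  finrank_right : Module.finrank K β = b
  finrank_line : Module.finrank K L = 2
  finrank_left_inf_line : Module.finrank K (α ⊓ L : Submodule K V) = 1
  finrank_right_inf_line : Module.finrank K (β ⊓ L : Submodule K V) = 1
  inf_line_ne : α ⊓ L ≠ β ⊓ L
  sup_inf_sup_eq_line : (α ⊔ L) ⊓ (β ⊔ L) = L

theorem IsFundament.isFundamentIn {k : Type*} [Field k] {n a b : ℕ}
    {α L β : Submodule k (Fin n → k)} (h : IsFundament a b α L β) : IsFundamentIn a b α L β :=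
  let ⟨hα, hβ, hL, hαL, hβL, hne, hsup⟩ := h
  ⟨hα, hβ, hL, hαL, hβL, hne, hsup⟩

namespace IsFundamentIn

variable {K V : Type*} [DivisionRing K] [AddCommGroup V] [Module K V] {a b : ℕ}
  {α L β : Submodule K V}

theorem disjoint (h : IsFundamentIn a b α L β) : Disjoint α β := by
  refine disjoint_of_isAtom_inf (Submodule.isAtom_iff_finrank_eq_one.mpr h.finrank_left_inf_line)
    (Submodule.isAtom_iff_finrank_eq_one.mpr h.finrank_right_inf_line) h.inf_line_ne ?_
  calc α ⊓ β ≤ (α ⊔ L) ⊓ (β ⊔ L) := inf_le_inf le_sup_left le_sup_left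
    _ = L := h.sup_inf_sup_eq_line

theorem isCompl [FiniteDimensional K V] (h : IsFundamentIn a b α L β)
    (hV : Module.finrank K V = a + b) : IsCompl α β :=
  (Submodule.isCompl_iff_disjoint α β
    (by rw [hV, h.finrank_left, h.finrank_right])).mpr h.disjoint

theorem inf_line_sup_inf_line (h : IsFundamentIn a b α L β) : α ⊓ L ⊔ β ⊓ L = L := by
  have : FiniteDimensional K L := .of_finrank_pos (by rw [h.finrank_line]; norm_num)
  have hdisj : Disjoint (α ⊓ L) (β ⊓ L) := h.disjoint.mono inf_le_left inf_le_left
  have hsum := Submodule.finrank_sup_add_finrank_inf_eq (α ⊓ L) (β ⊓ L)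
  rw [hdisj.eq_bot, finrank_bot, h.finrank_left_inf_line, h.finrank_right_inf_line] at hsum
  exact Submodule.eq_of_le_of_finrank_eq (sup_le inf_le_right inf_le_right)
    (hsum.trans h.finrank_line.symm)

end IsFundamentIn

theorem PGL_transitive_on_fundaments_general {K V W : Type*} [DivisionRing K]
    [AddCommGroup V] [Module K V] [FiniteDimensional K V]
    [AddCommGroup W] [Module K W] [FiniteDimensional K W] {a b : ℕ}
    (hV : Module.finrank K V = a + b) (hW : Module.finrank K W = a + b)
    {α L β : Submodule K V} {α' L' β' : Submodule K W}
    (h : IsFundamentIn a b α L β) (h' : IsFundamentIn a b α' L' β') :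
    ∃ g : V ≃ₗ[K] W, α.map g.toLinearMap = α' ∧ L.map g.toLinearMap = L' ∧
      β.map g.toLinearMap = β' := by
  obtain ⟨g, hα, hαL, hβ, hβL⟩ := exists_linearEquiv_map_eq_of_isCompl
    (h.isCompl hV) (h'.isCompl hW)
    (h.finrank_left.trans h'.finrank_left.symm)
    (h.finrank_right.trans h'.finrank_right.symm)
    (h.finrank_left_inf_line.trans h'.finrank_left_inf_line.symm)
    (h.finrank_right_inf_line.trans h'.finrank_right_inf_line.symm)
  refine ⟨g, hα, ?_, hβ⟩
  calc L.map g.toLinearMap = (α ⊓ L ⊔ β ⊓ L).map g.toLinearMap := by rw [h.inf_line_sup_inf_line]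
    _ = α' ⊓ L' ⊔ β' ⊓ L' := by rw [Submodule.map_sup, hαL, hβL]
    _ = L' := h'.inf_line_sup_inf_line

/-- `PGL_{a+b}(k)` acts transitively on the fundaments of type `(a,b)` of `PG(a+b-1,k)`. -/
theorem PGL_transitive_on_fundaments {k : Type*} [Field k]
    (a b : ℕ) (ha : 2 ≤ a) (hb : 2 ≤ b)
    (α L β α' L' β' : Submodule k (Fin (a + b) → k))
    (h : IsFundament a b α L β) (h' : IsFundament a b α' L' β') :
    ∃ g : (Fin (a + b) → k) ≃ₗ[k] (Fin (a + b) → k),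
      Submodule.map (g : (Fin (a + b) → k) →ₗ[k] (Fin (a + b) → k)) α = α' ∧
      Submodule.map (g : (Fin (a + b) → k) →ₗ[k] (Fin (a + b) → k)) L = L' ∧
      Submodule.map (g : (Fin (a + b) → k) →ₗ[k] (Fin (a + b) → k)) β = β' := by
  exact PGL_transitive_on_fundaments_general (Module.finrank_fin_fun k)
    (Module.finrank_fin_fun k) h.isFundamentIn h'.isFundamentIn
end

section
/- Let k be a field. The group of self-homeomorphisms of the topological space PrimeSpectrum (Polynomial k) is isomorphic, as a group, to the symmetric group on the set of closed points: Nonempty ((PrimeSpectrum (Polynomial k) ≃ₜ PrimeSpectrum (Polynomial k)) ≃* Equiv.Perm {p : PrimeSpectrum (Polynomial k) // p.asIdeal.IsMaximal}). -/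
/-- The group of self-homeomorphisms of a topological space, with `f * g = g.trans f`
(i.e. composition `f ∘ g`). -/
instance homeomorphSelfGroup {X : Type*} [TopologicalSpace X] : Group (X ≃ₜ X) where
  mul f g := g.trans f
  one := Homeomorph.refl X
  inv := Homeomorph.symm
  mul_assoc f g h := Homeomorph.ext fun _ => rfl
  one_mul f := Homeomorph.ext fun _ => rfl
  mul_one f := Homeomorph.ext fun _ => rfl
  inv_mul_cancel f := Homeomorph.ext fun x => f.symm_apply_apply x

/-!
In an irreducible Noetherian `T₀` space of dimension at most one, a proper irreducible closed subset
contains no smaller one, so by `T₀` it is a single closed point; by Noetherianity every proper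
closed subset is then a finite set of closed points, and conversely such sets are closed. A point
that is not closed is therefore dense, and by `T₀` there is at most one such point. Every
self-homeomorphism permutes the closed points and fixes the remaining point, if there is one, so it
is determined by this permutation. Conversely every permutation of the closed points preserves
finite sets of them, so fixing the remaining point extends it to a homeomorphism.
-/

open TopologicalSpace

section ClosedPoints

variable {X : Type*} [TopologicalSpace X]

lemma homeomorph_apply_mem_closedPoints_iff (f : X ≃ₜ X) (x : X) :
    f x ∈ closedPoints X ↔ x ∈ closedPoints X :=
  Set.ext_iff.mp f.isClosedEmbedding.preimage_closedPoints x

/-- The action of the self-homeomorphisms of a space on its set of closed points. -/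
def homeomorphToPermClosedPoints : (X ≃ₜ X) →* Equiv.Perm (closedPoints X) where
  toFun f := Equiv.Perm.subtypePerm f.toEquiv (homeomorph_apply_mem_closedPoints_iff f)
  map_one' := rfl
  map_mul' _ _ := rfl

lemma homeomorphToPermClosedPoints_injective (hX : (closedPoints X)ᶜ.Subsingleton) :
    Function.Injective (homeomorphToPermClosedPoints (X := X)) := by
  intro f g hfg
  ext x
  by_cases hx : x ∈ closedPoints X
  · exact congrArg Subtype.val (DFunLike.congr_fun hfg ⟨x, hx⟩)
  · exact hX (mt (homeomorph_apply_mem_closedPoints_iff f x).mp hx)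
      (mt (homeomorph_apply_mem_closedPoints_iff g x).mp hx)

lemma isClosed_of_finite_of_subset_closedPoints {S : Set X} (hfin : S.Finite)
    (hS : S ⊆ closedPoints X) : IsClosed S := by
  rw [← Set.biUnion_of_singleton S]
  exact hfin.isClosed_biUnion fun _ hx ↦ hS hx

section DimensionLEOne

variable [T0Space X] [PreirreducibleSpace X]

lemma exists_eq_singleton_of_isIrreducible_of_isClosed_of_ne_univ (hdim : topologicalKrullDim X ≤ 1)
    {Z : Set X} (hirr : IsIrreducible Z) (hclosed : IsClosed Z) (hne : Z ≠ Set.univ) :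
    ∃ x, Z = {x} := by
  let Y : IrreducibleCloseds X := ⟨Z, hirr, hclosed⟩
  have not_isMax : ¬ IsMax Y := fun hmax ↦
    let top : IrreducibleCloseds X :=
      ⟨Set.univ, ⟨hirr.nonempty.mono (Set.subset_univ Z),
        PreirreducibleSpace.isPreirreducible_univ⟩, isClosed_univ⟩
    hne (Set.univ_subset_iff.mp (hmax (b := top) (Set.subset_univ Z)))
  have isMin : IsMin Y := (Order.krullDim_le_one_iff.mp hdim Y).resolve_right not_isMax
  have specializes {x y : X} (hx : x ∈ Z) (hy : y ∈ Z) : x ⤳ y :=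
    let closure_x : IrreducibleCloseds X :=
      ⟨closure {x}, isIrreducible_singleton.closure, isClosed_closure⟩
    specializes_iff_mem_closure.mpr
      (isMin (b := closure_x) (hclosed.closure_subset_iff.mpr (Set.singleton_subset_iff.mpr hx)) hy)
  exact Set.exists_eq_singleton_iff_nonempty_subsingleton.mpr
    ⟨hirr.nonempty, fun _ hx _ hy ↦ ((specializes hx hy).antisymm (specializes hy hx)).eq⟩

variable [NoetherianSpace X]

theorem isClosed_iff_eq_univ_or_finite_subset_closedPoints (hdim : topologicalKrullDim X ≤ 1)
    {S : Set X} : IsClosed S ↔ S = Set.univ ∨ S.Finite ∧ S ⊆ closedPoints X := by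
  refine ⟨fun hS ↦ or_iff_not_imp_left.mpr fun hne ↦ ?_, ?_⟩
  · obtain ⟨C, hfin, hclosed, hirr, rfl⟩ :=
      NoetherianSpace.exists_finite_set_isClosed_irreducible hS
    have eq_singleton : ∀ Z ∈ C, ∃ x, Z = {x} := fun Z hZ ↦
      exists_eq_singleton_of_isIrreducible_of_isClosed_of_ne_univ hdim (hirr Z hZ) (hclosed Z hZ)
        fun h ↦ hne (Set.univ_subset_iff.mp (h ▸ Set.subset_sUnion_of_mem hZ))
    constructor
    · refine hfin.sUnion fun Z hZ ↦ ?_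
      obtain ⟨x, rfl⟩ := eq_singleton Z hZ
      exact Set.finite_singleton x
    · refine Set.sUnion_subset fun Z hZ ↦ ?_
      obtain ⟨x, rfl⟩ := eq_singleton Z hZ
      exact Set.singleton_subset_iff.mpr (hclosed {x} hZ)
  · rintro (rfl | ⟨hfin, hS⟩)
    · exact isClosed_univ
    · exact isClosed_of_finite_of_subset_closedPoints hfin hS

lemma subsingleton_compl_closedPoints (hdim : topologicalKrullDim X ≤ 1) :
    (closedPoints X)ᶜ.Subsingleton := by
  have closure_eq_univ {x : X} (hx : x ∉ closedPoints X) : closure {x} = Set.univ :=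
    ((isClosed_iff_eq_univ_or_finite_subset_closedPoints hdim).mp isClosed_closure).resolve_right
      fun h ↦ hx (h.2 (subset_closure rfl))
  intro x hx y hy
  exact (inseparable_iff_closure_eq.mpr
    ((closure_eq_univ hx).trans (closure_eq_univ hy).symm)).eq

lemma continuous_of_injective_of_preimage_closedPoints_subset (hdim : topologicalKrullDim X ≤ 1)
    {f : X → X} (hf : f.Injective) (hclosed : f ⁻¹' closedPoints X ⊆ closedPoints X) :
    Continuous f := by
  refine continuous_iff_isClosed.mpr fun S hS ↦ ?_
  rcases (isClosed_iff_eq_univ_or_finite_subset_closedPoints hdim).mp hS with rfl | ⟨hfin, hsub⟩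
  · exact isClosed_univ
  · exact isClosed_of_finite_of_subset_closedPoints (hfin.preimage hf.injOn)
      ((Set.preimage_mono hsub).trans hclosed)

lemma homeomorphToPermClosedPoints_surjective (hdim : topologicalKrullDim X ≤ 1) :
    Function.Surjective (homeomorphToPermClosedPoints (X := X)) := by
  classical
  have continuous_ofSubtype (σ : Equiv.Perm (closedPoints X)) :
      Continuous (Equiv.Perm.ofSubtype σ) :=
    continuous_of_injective_of_preimage_closedPoints_subset hdim (Equiv.injective _)
      fun x ↦ (Equiv.Perm.ofSubtype_apply_mem_iff_mem σ x).mp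
  intro σ
  refine ⟨⟨Equiv.Perm.ofSubtype σ, continuous_ofSubtype σ, ?_⟩, Equiv.Perm.subtypePerm_ofSubtype σ⟩
  have continuous_symm := continuous_ofSubtype σ⁻¹
  rwa [map_inv] at continuous_symm

/-- For an irreducible Noetherian `T₀` space of dimension at most one, such as the underlying space
of an algebraic curve, the topological automorphisms are the permutations of the closed points. -/
noncomputable def homeomorphMulEquivPermClosedPoints (hdim : topologicalKrullDim X ≤ 1) :
    (X ≃ₜ X) ≃* Equiv.Perm (closedPoints X) :=
  MulEquiv.ofBijective homeomorphToPermClosedPoints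
    ⟨homeomorphToPermClosedPoints_injective (subsingleton_compl_closedPoints hdim),
      homeomorphToPermClosedPoints_surjective hdim⟩

end DimensionLEOne

end ClosedPoints

theorem topAut_specPolynomial_iso_perm_closedPoints_general {R : Type*} [CommRing R]
    [PreirreducibleSpace (PrimeSpectrum R)] [NoetherianSpace (PrimeSpectrum R)]
    [Ring.KrullDimLE 1 R] :
    Nonempty ((PrimeSpectrum R ≃ₜ PrimeSpectrum R) ≃*
      Equiv.Perm {p : PrimeSpectrum R // p.asIdeal.IsMaximal}) := by
  have hdim : topologicalKrullDim (PrimeSpectrum R) ≤ 1 :=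
    (PrimeSpectrum.topologicalKrullDim_eq_ringKrullDim R).trans_le Order.KrullDimLE.krullDim_le
  let closedPoints_equiv :
      closedPoints (PrimeSpectrum R) ≃ {p : PrimeSpectrum R // p.asIdeal.IsMaximal} :=
    Equiv.subtypeEquivRight PrimeSpectrum.isClosed_singleton_iff_isMaximal
  exact ⟨(homeomorphMulEquivPermClosedPoints hdim).trans closedPoints_equiv.permCongrHom⟩

/-- The topological automorphism group of `Spec k[X]`, for `k` a field, is the symmetric
group on the set of closed points. -/
theorem topAut_specPolynomial_iso_perm_closedPoints {k : Type*} [Field k] :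
    Nonempty ((PrimeSpectrum (Polynomial k) ≃ₜ PrimeSpectrum (Polynomial k)) ≃*
      Equiv.Perm {p : PrimeSpectrum (Polynomial k) // p.asIdeal.IsMaximal}) :=
  topAut_specPolynomial_iso_perm_closedPoints_general
end
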